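/- Let d, r be positive integers with r < d, and let E be a d × r real matrix with orthonormal columns (Eᵀ E = I_r). Fix σ > 0 and a measurable noise schedule σ_• : (0,1) → ℝ with 0 < σ_min ≤ σ_t ≤ σ_max < ∞ for all t ∈ (0,1). Let Θ be the set of pairs (U, V) of d × r real matrices with Uᵀ U = I_r and Vᵀ V positive definite. For (U, V) ∈ Θ and t ∈ (0,1) set Σ_{θ,t} := U Vᵀ V Uᵀ + σ_t² I_d and Σ_{σ,t} := E Eᵀ + (σ² + σ_t²) I_d, and define the distillation loss L(U, V) := ∫₀¹ tr( Σ_{θ,t} · (Σ_{σ,t}⁻¹ − Σ_{θ,t}⁻¹)² ) dt. Then (U*, V*) ∈ Θ is a global minimizer of L over Θ if and only if there exists an orthogonal r × r matrix Q with U* = E Q and (V*)ᵀ V* = (1 + σ²) I_r. -/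

import Mathlib

open Matrix MeasureTheory

section DistillationLoss

variable {d r : ℕ}

theorem inv_conj_add_smul_one {U : Matrix (Fin d) (Fin r) ℝ} (hU : Uᵀ * U = 1)
    (K : Matrix (Fin r) (Fin r) ℝ) {s : ℝ} (hs : s ≠ 0)
    (hK : IsUnit (K + s • (1 : Matrix (Fin r) (Fin r) ℝ)).det) :
    (U * K * Uᵀ + s • (1 : Matrix (Fin d) (Fin d) ℝ))⁻¹ =
      U * (K + s • (1 : Matrix (Fin r) (Fin r) ℝ))⁻¹ * Uᵀ + s⁻¹ • (1 - U * Uᵀ) := by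
  apply Matrix.inv_eq_right_inv
  set X := K + s • (1 : Matrix (Fin r) (Fin r) ℝ) with hX
  have hKX : K = X - s • 1 := by rw [hX]; abel
  have hXX : X * X⁻¹ = 1 := Matrix.mul_nonsing_inv X hK
  have hUU : ∀ Y : Matrix (Fin r) (Fin d) ℝ, Uᵀ * (U * Y) = Y := fun Y => by
    rw [← Matrix.mul_assoc, hU, Matrix.one_mul]
  have hXY : ∀ Y : Matrix (Fin r) (Fin d) ℝ, X * (X⁻¹ * Y) = Y := fun Y => by
    rw [← Matrix.mul_assoc, hXX, Matrix.one_mul]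
  rw [hKX]
  simp only [Matrix.mul_assoc, Matrix.add_mul, Matrix.mul_add, Matrix.mul_sub, Matrix.sub_mul,
    Matrix.smul_mul, Matrix.mul_smul, Matrix.one_mul, Matrix.mul_one, hUU, hXY]
  match_scalars <;> field_simp <;> ring

theorem posDef_gram_add_smul_one (V : Matrix (Fin d) (Fin r) ℝ) {s : ℝ} (hs : 0 < s) :
    (Vᵀ * V + s • (1 : Matrix (Fin r) (Fin r) ℝ)).PosDef := by
  have h := Matrix.posSemidef_conjTranspose_mul_self V
  rw [Matrix.conjTranspose_eq_transpose_of_trivial] at h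
  exact Matrix.PosDef.posSemidef_add h (Matrix.PosDef.one.smul hs)

theorem isUnit_det_gram_add_smul_one (V : Matrix (Fin d) (Fin r) ℝ) {s : ℝ} (hs : 0 < s) :
    IsUnit (Vᵀ * V + s • (1 : Matrix (Fin r) (Fin r) ℝ)).det :=
  (posDef_gram_add_smul_one V hs).det_pos.ne'.isUnit

theorem trace_mul_sub_inv_sq {n : ℕ} {S : Matrix (Fin n) (Fin n) ℝ} (hS : IsUnit S.det)
    (T : Matrix (Fin n) (Fin n) ℝ) :
    (S * (T - S⁻¹) ^ 2).trace = (S * (T * T)).trace - 2 * T.trace + S⁻¹.trace := by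
  have hSS : S * S⁻¹ = 1 := Matrix.mul_nonsing_inv S hS
  have hSY : ∀ Y : Matrix (Fin n) (Fin n) ℝ, S * (S⁻¹ * Y) = Y := fun Y => by
    rw [← Matrix.mul_assoc, hSS, Matrix.one_mul]
  have hcomm : (S * (T * S⁻¹)).trace = T.trace := by
    rw [Matrix.trace_mul_comm, Matrix.mul_assoc, Matrix.nonsing_inv_mul S hS, Matrix.mul_one]
  rw [pow_two]
  simp only [Matrix.mul_sub, Matrix.sub_mul, hSY, Matrix.trace_sub, hcomm]
  ring

/-- The integrand of the distillation loss at noise variance `s`, where `c` is the variance of the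
noise in the data. -/
noncomputable def fisherTrace (E U V : Matrix (Fin d) (Fin r) ℝ) (c s : ℝ) : ℝ :=
  ((U * Vᵀ * V * Uᵀ + s • (1 : Matrix (Fin d) (Fin d) ℝ)) *
    ((E * Eᵀ + (c + s) • (1 : Matrix (Fin d) (Fin d) ℝ))⁻¹ -
      (U * Vᵀ * V * Uᵀ + s • (1 : Matrix (Fin d) (Fin d) ℝ))⁻¹) ^ 2).trace

theorem isUnit_det_conj_gram_add (U V : Matrix (Fin d) (Fin r) ℝ) {s : ℝ} (hs : 0 < s) :
    IsUnit (U * Vᵀ * V * Uᵀ + s • (1 : Matrix (Fin d) (Fin d) ℝ)).det := by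
  have h := Matrix.posSemidef_conjTranspose_mul_self (V * Uᵀ)
  rw [Matrix.conjTranspose_eq_transpose_of_trivial, Matrix.transpose_mul,
    Matrix.transpose_transpose, ← Matrix.mul_assoc] at h
  exact (Matrix.PosDef.posSemidef_add h (Matrix.PosDef.one.smul hs)).det_pos.ne'.isUnit

theorem isUnit_det_mul_transpose_add (E : Matrix (Fin d) (Fin r) ℝ) {s : ℝ} (hs : 0 < s) :
    IsUnit (E * Eᵀ + s • (1 : Matrix (Fin d) (Fin d) ℝ)).det := by
  simpa using isUnit_det_gram_add_smul_one Eᵀ hs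

theorem fisherTrace_eq {E U : Matrix (Fin d) (Fin r) ℝ} (hE : Eᵀ * E = 1) (hU : Uᵀ * U = 1)
    (V : Matrix (Fin d) (Fin r) ℝ) {c s : ℝ} (hc : 0 < c) (hs : 0 < s) :
    fisherTrace E U V c s =
      (d - r : ℝ) * (s * (c + s)⁻¹ ^ 2 - 2 * (c + s)⁻¹ + s⁻¹) +
      ((c + s)⁻¹ ^ 2 - (1 + (c + s))⁻¹ ^ 2) * ((U * (Vᵀ * V) * Uᵀ) * (1 - E * Eᵀ)).trace +
      ((Vᵀ * V + s • (1 : Matrix (Fin r) (Fin r) ℝ)) *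
        ((1 + (c + s))⁻¹ • (1 : Matrix (Fin r) (Fin r) ℝ) -
          (Vᵀ * V + s • (1 : Matrix (Fin r) (Fin r) ℝ))⁻¹) ^ 2).trace := by
  have hcs : 0 < c + s := by positivity
  have hX := isUnit_det_gram_add_smul_one V hs
  have hT : (E * Eᵀ + (c + s) • (1 : Matrix (Fin d) (Fin d) ℝ))⁻¹ =
      (1 + (c + s))⁻¹ • (E * Eᵀ) + (c + s)⁻¹ • (1 - E * Eᵀ) := by
    have h1 : (1 : Matrix (Fin r) (Fin r) ℝ) + (c + s) • (1 : Matrix (Fin r) (Fin r) ℝ) =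
        (1 + (c + s)) • (1 : Matrix (Fin r) (Fin r) ℝ) := by
      rw [add_smul (1 : ℝ), one_smul]
    have h2 : ((1 + (c + s)) • (1 : Matrix (Fin r) (Fin r) ℝ))⁻¹ =
        (1 + (c + s))⁻¹ • (1 : Matrix (Fin r) (Fin r) ℝ) := by
      apply Matrix.inv_eq_right_inv
      rw [Matrix.smul_mul, Matrix.one_mul, smul_smul, mul_inv_cancel₀ (by positivity), one_smul]
    have h := inv_conj_add_smul_one hE 1 hcs.ne' (by
      rw [h1, Matrix.det_smul, Matrix.det_one, mul_one]
      exact (pow_pos (by positivity) _).ne'.isUnit)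
    rw [h1, h2] at h
    simpa using h
  have hS := inv_conj_add_smul_one hU (Vᵀ * V) hs.ne' hX
  have hUV : U * Vᵀ * V * Uᵀ = U * (Vᵀ * V) * Uᵀ := by simp only [Matrix.mul_assoc]
  have hSdet := isUnit_det_conj_gram_add U V hs
  rw [hUV] at hSdet
  have hPP : E * Eᵀ * (E * Eᵀ) = E * Eᵀ := by
    rw [Matrix.mul_assoc, ← Matrix.mul_assoc Eᵀ, hE, Matrix.one_mul]
  have hTT : ((1 + (c + s))⁻¹ • (E * Eᵀ) + (c + s)⁻¹ • (1 - E * Eᵀ)) *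
      ((1 + (c + s))⁻¹ • (E * Eᵀ) + (c + s)⁻¹ • (1 - E * Eᵀ)) =
      (1 + (c + s))⁻¹ ^ 2 • (E * Eᵀ) + (c + s)⁻¹ ^ 2 • (1 - E * Eᵀ) := by
    simp only [Matrix.add_mul, Matrix.mul_add, Matrix.smul_mul, Matrix.mul_smul, Matrix.mul_sub,
      Matrix.sub_mul, Matrix.one_mul, Matrix.mul_one, hPP]
    module
  have hP : (E * Eᵀ).trace = r := by rw [Matrix.trace_mul_comm, hE]; simp
  have hUU : (U * Uᵀ).trace = r := by rw [Matrix.trace_mul_comm, hU]; simp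
  have hconj : ∀ Y : Matrix (Fin r) (Fin r) ℝ, (U * Y * Uᵀ).trace = Y.trace := fun Y => by
    rw [Matrix.trace_mul_comm, ← Matrix.mul_assoc, hU, Matrix.one_mul]
  have hMP : (U * (Vᵀ * V) * Uᵀ * (1 - E * Eᵀ)).trace =
      (Vᵀ * V).trace - (U * (Vᵀ * V) * Uᵀ * (E * Eᵀ)).trace := by
    rw [Matrix.mul_sub, Matrix.mul_one, Matrix.trace_sub, hconj]
  unfold fisherTrace
  rw [hUV, trace_mul_sub_inv_sq hSdet, hT, hS, hTT, trace_mul_sub_inv_sq hX]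
  simp only [Matrix.add_mul, Matrix.mul_add, Matrix.smul_mul, Matrix.mul_smul, Matrix.one_mul,
    Matrix.mul_one, Matrix.trace_add, Matrix.trace_smul, Matrix.trace_sub, Matrix.trace_one,
    Fintype.card_fin, hMP, hP, hUU, hconj, smul_eq_mul, smul_smul]
  field_simp
  ring

theorem trace_conj_gram_mul_compl_proj {E : Matrix (Fin d) (Fin r) ℝ} (hE : Eᵀ * E = 1)
    (U V : Matrix (Fin d) (Fin r) ℝ) :
    ((U * (Vᵀ * V) * Uᵀ) * (1 - E * Eᵀ)).trace =
      ((V * Uᵀ * (1 - E * Eᵀ))ᴴ * (V * Uᵀ * (1 - E * Eᵀ))).trace := by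
  have hPP : (1 - E * Eᵀ) * (1 - E * Eᵀ) = 1 - E * Eᵀ := by
    have : E * Eᵀ * (E * Eᵀ) = E * Eᵀ := by
      rw [Matrix.mul_assoc, ← Matrix.mul_assoc Eᵀ, hE, Matrix.one_mul]
    simp [Matrix.mul_sub, Matrix.sub_mul, this]
  have hsymm : (1 - E * Eᵀ)ᵀ = 1 - E * Eᵀ := by simp
  rw [Matrix.conjTranspose_eq_transpose_of_trivial, Matrix.transpose_mul, hsymm,
    Matrix.transpose_mul, Matrix.transpose_transpose]
  conv_lhs => rw [← hPP]
  rw [← Matrix.mul_assoc, Matrix.trace_mul_comm]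
  simp only [Matrix.mul_assoc]

theorem trace_gram_nonneg {m n : ℕ} (A : Matrix (Fin m) (Fin n) ℝ) : 0 ≤ (Aᴴ * A).trace :=
  (Matrix.posSemidef_conjTranspose_mul_self A).trace_nonneg

theorem trace_gram_add_mul_sq (V : Matrix (Fin d) (Fin r) ℝ) (s : ℝ)
    {B : Matrix (Fin r) (Fin r) ℝ} (hB : Bᵀ = B) :
    ((Vᵀ * V + s • (1 : Matrix (Fin r) (Fin r) ℝ)) * B ^ 2).trace =
      ((V * B)ᴴ * (V * B)).trace + s * (Bᴴ * B).trace := by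
  simp only [Matrix.conjTranspose_eq_transpose_of_trivial, Matrix.transpose_mul, hB, pow_two]
  rw [Matrix.add_mul, Matrix.trace_add, ← Matrix.mul_assoc, Matrix.trace_mul_comm]
  simp [Matrix.mul_assoc]

theorem transpose_smul_one_sub_inv_gram_add (V : Matrix (Fin d) (Fin r) ℝ) (a s : ℝ) :
    (a • (1 : Matrix (Fin r) (Fin r) ℝ) -
      (Vᵀ * V + s • (1 : Matrix (Fin r) (Fin r) ℝ))⁻¹)ᵀ =
    a • (1 : Matrix (Fin r) (Fin r) ℝ) - (Vᵀ * V + s • (1 : Matrix (Fin r) (Fin r) ℝ))⁻¹ := by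
  simp [Matrix.transpose_nonsing_inv]

theorem inv_sq_gap_pos {c s : ℝ} (hc : 0 < c) (hs : 0 < s) :
    0 < (c + s)⁻¹ ^ 2 - (1 + (c + s))⁻¹ ^ 2 := by
  have h : (1 + (c + s))⁻¹ < (c + s)⁻¹ := by
    apply inv_strictAnti₀ <;> linarith
  have h0 : 0 < (1 + (c + s))⁻¹ := by positivity
  nlinarith

/-- The minimal value of `fisherTrace` at noise variance `s`. -/
noncomputable def fisherTraceMin (d r : ℕ) (c s : ℝ) : ℝ :=
  (d - r : ℝ) * (s * (c + s)⁻¹ ^ 2 - 2 * (c + s)⁻¹ + s⁻¹)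

theorem fisherTraceMin_le {E U : Matrix (Fin d) (Fin r) ℝ} (hE : Eᵀ * E = 1) (hU : Uᵀ * U = 1)
    (V : Matrix (Fin d) (Fin r) ℝ) {c s : ℝ} (hc : 0 < c) (hs : 0 < s) :
    fisherTraceMin d r c s ≤ fisherTrace E U V c s := by
  rw [fisherTrace_eq hE hU V hc hs, fisherTraceMin, trace_conj_gram_mul_compl_proj hE,
    trace_gram_add_mul_sq V s (transpose_smul_one_sub_inv_gram_add V _ s), add_assoc]
  have h1 := mul_nonneg (inv_sq_gap_pos hc hs).le (trace_gram_nonneg (V * Uᵀ * (1 - E * Eᵀ)))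
  exact le_add_of_nonneg_right (add_nonneg h1 (add_nonneg (trace_gram_nonneg _)
    (mul_nonneg hs.le (trace_gram_nonneg _))))

theorem fisherTrace_eq_min_iff {E U V : Matrix (Fin d) (Fin r) ℝ} (hE : Eᵀ * E = 1)
    (hU : Uᵀ * U = 1) (hV : (Vᵀ * V).PosDef) {c s : ℝ} (hc : 0 < c) (hs : 0 < s) :
    fisherTrace E U V c s = fisherTraceMin d r c s ↔
      (∃ Q : Matrix (Fin r) (Fin r) ℝ, Qᵀ * Q = 1 ∧ U = E * Q) ∧
        Vᵀ * V = (1 + c) • (1 : Matrix (Fin r) (Fin r) ℝ) := by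
  rw [fisherTrace_eq hE hU V hc hs, fisherTraceMin]
  have hXdet := isUnit_det_gram_add_smul_one V hs
  constructor
  · intro h
    rw [trace_conj_gram_mul_compl_proj hE,
      trace_gram_add_mul_sq V s (transpose_smul_one_sub_inv_gram_add V _ s)] at h
    set A := V * Uᵀ * (1 - E * Eᵀ) with hA
    set B := (1 + (c + s))⁻¹ • (1 : Matrix (Fin r) (Fin r) ℝ) -
      (Vᵀ * V + s • (1 : Matrix (Fin r) (Fin r) ℝ))⁻¹ with hB
    have hg := inv_sq_gap_pos hc hs
    have h1 := trace_gram_nonneg A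
    have h2 := trace_gram_nonneg (V * B)
    have h3 := trace_gram_nonneg B
    have h1' := mul_nonneg hg.le h1
    have h3' := mul_nonneg hs.le h3
    have hA0 : A = 0 := by
      rw [← Matrix.trace_conjTranspose_mul_self_eq_zero_iff]
      exact (mul_eq_zero.mp (by linarith)).resolve_left hg.ne'
    have hB0 : B = 0 := by
      rw [← Matrix.trace_conjTranspose_mul_self_eq_zero_iff]
      exact (mul_eq_zero.mp (by linarith)).resolve_left hs.ne'
    constructor
    · have hKdet : IsUnit (Vᵀ * V).det := hV.det_pos.ne'.isUnit
      have hUP : Uᵀ * (1 - E * Eᵀ) = 0 := by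
        calc Uᵀ * (1 - E * Eᵀ) = (Vᵀ * V)⁻¹ * (Vᵀ * V) * (Uᵀ * (1 - E * Eᵀ)) := by
              rw [Matrix.nonsing_inv_mul _ hKdet, Matrix.one_mul]
          _ = (Vᵀ * V)⁻¹ * (Vᵀ * A) := by rw [hA]; simp only [Matrix.mul_assoc]
          _ = 0 := by rw [hA0]; simp
      have hEU : U = E * (Eᵀ * U) := by
        have := congrArg Matrix.transpose hUP
        rw [Matrix.transpose_mul] at this
        simp only [Matrix.transpose_sub, Matrix.transpose_one, Matrix.transpose_mul,
          Matrix.transpose_transpose, Matrix.transpose_zero, Matrix.sub_mul, Matrix.one_mul,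
          Matrix.mul_assoc] at this
        exact sub_eq_zero.mp this
      refine ⟨Eᵀ * U, ?_, hEU⟩
      rw [Matrix.transpose_mul, Matrix.transpose_transpose, Matrix.mul_assoc, ← hEU, hU]
    · have hinv := sub_eq_zero.mp hB0
      have hmul := Matrix.mul_nonsing_inv _ hXdet
      rw [← hinv, Matrix.mul_smul, Matrix.mul_one] at hmul
      have hpos : (1 + (c + s)) ≠ 0 := by positivity
      have h4 := congrArg (fun Y => (1 + (c + s)) • Y) hmul
      simp only [smul_smul, mul_inv_cancel₀ hpos, one_smul] at h4
      rw [← add_assoc, add_smul] at h4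
      exact add_right_cancel h4
  · rintro ⟨⟨Q, -, rfl⟩, hK⟩
    have hP : (E * Q)ᵀ * (1 - E * Eᵀ) = 0 := by
      rw [Matrix.transpose_mul, Matrix.mul_assoc, Matrix.mul_sub, Matrix.mul_one,
        ← Matrix.mul_assoc Eᵀ, hE, Matrix.one_mul, sub_self, Matrix.mul_zero]
    have hX : (Vᵀ * V + s • (1 : Matrix (Fin r) (Fin r) ℝ))⁻¹ =
        (1 + (c + s))⁻¹ • (1 : Matrix (Fin r) (Fin r) ℝ) := by
      apply Matrix.inv_eq_right_inv
      rw [hK, ← add_smul, add_assoc, Matrix.smul_mul, Matrix.one_mul, smul_smul,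
        mul_inv_cancel₀ (by positivity), one_smul]
    rw [hX, Matrix.mul_assoc _ (E * Q)ᵀ, hP]
    simp

theorem continuousOn_fisherTrace (E U V : Matrix (Fin d) (Fin r) ℝ) {c : ℝ} (hc : 0 < c) :
    ContinuousOn (fisherTrace E U V c) (Set.Ioi 0) := by
  intro s hs
  have hs : 0 < s := hs
  apply ContinuousAt.continuousWithinAt
  have hinv : ∀ {f : ℝ → Matrix (Fin d) (Fin d) ℝ}, Continuous f → IsUnit (f s).det →
      ContinuousAt (fun x => (f x)⁻¹) s := by
    intro f hf hdet
    simp only [Matrix.inv_def, Ring.inverse_eq_inv']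
    exact (hf.matrix_det.continuousAt.inv₀ hdet.ne_zero).smul hf.matrix_adjugate.continuousAt
  have hS : Continuous fun x : ℝ =>
      U * Vᵀ * V * Uᵀ + x • (1 : Matrix (Fin d) (Fin d) ℝ) := by fun_prop
  have hT : Continuous fun x : ℝ =>
      E * Eᵀ + (c + x) • (1 : Matrix (Fin d) (Fin d) ℝ) := by fun_prop
  have hS' := hinv hS (isUnit_det_conj_gram_add U V hs)
  have hT' := hinv hT (isUnit_det_mul_transpose_add E (by positivity))
  exact (continuous_id.matrix_trace.continuousAt (x := _)).comp
    (hS.continuousAt.mul ((hT'.sub hS').pow 2))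

theorem continuousOn_fisherTraceMin (d r : ℕ) {c : ℝ} (hc : 0 < c) :
    ContinuousOn (fisherTraceMin d r c) (Set.Ioi 0) := by
  unfold fisherTraceMin
  have h1 : ∀ s ∈ Set.Ioi (0 : ℝ), s ≠ 0 := fun s hs => (Set.mem_Ioi.mp hs).ne'
  have h2 : ∀ s ∈ Set.Ioi (0 : ℝ), c + s ≠ 0 := fun s hs =>
    (add_pos hc (Set.mem_Ioi.mp hs)).ne'
  fun_prop (disch := assumption)

theorem integrableOn_comp_of_bounded {g : ℝ → ℝ} (hg : ContinuousOn g (Set.Ioi 0))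
    {f : ℝ → ℝ} (hf : Measurable f) {a b : ℝ} (ha : 0 < a)
    (hbound : ∀ t ∈ Set.Ioo (0 : ℝ) 1, f t ∈ Set.Icc a b) :
    IntegrableOn (fun t => g (f t)) (Set.Ioo 0 1) := by
  have hsub : Set.Icc a b ⊆ Set.Ioi 0 := fun x hx => lt_of_lt_of_le ha hx.1
  have hmeas : Measurable ((Set.Icc a b).indicator g) := by
    rw [← Set.piecewise_eq_indicator]
    exact (hg.mono hsub).measurable_piecewise continuousOn_const measurableSet_Icc
  obtain ⟨C, hC⟩ := isCompact_Icc.exists_bound_of_continuousOn (hg.mono hsub)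
  have hfin : IntegrableOn (fun t => (Set.Icc a b).indicator g (f t)) (Set.Ioo 0 1) := by
    apply IntegrableOn.of_bound (by simp) (hmeas.comp hf).aestronglyMeasurable C
    filter_upwards [ae_restrict_mem measurableSet_Ioo] with t ht
    rw [Function.comp_apply, Set.indicator_of_mem (hbound t ht)]
    exact hC _ (hbound t ht)
  exact hfin.congr_fun (fun t ht => Set.indicator_of_mem (hbound t ht) g) measurableSet_Ioo

end DistillationLoss

/-- Let `E` be a `d × r` (`r < d`) real matrix with orthonormal columns,
`σ > 0`, and `σ_t` a measurable noise schedule on `(0,1)` bounded in `[σmin, σmax]` with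
`0 < σmin`. Over the parameter class `Θ = {(U,V) : Uᵀ U = I_r, Vᵀ V ≻ 0}`, the
distillation loss
`L(U,V) = ∫₀¹ tr((U Vᵀ V Uᵀ + σ_t² I)·((E Eᵀ + (σ² + σ_t²) I)⁻¹ − (U Vᵀ V Uᵀ + σ_t² I)⁻¹)²) dt`
is globally minimized at `(U*, V*) ∈ Θ` iff `U* = E Q` for some orthogonal `Q` and
`(V*)ᵀ V* = (1 + σ²) I_r`. -/
theorem distillation_global_minimizers {d r : ℕ} (hd : 0 < d) (hr : 0 < r) (hrd : r < d)
    (E : Matrix (Fin d) (Fin r) ℝ) (hE : Eᵀ * E = 1)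
    (σ : ℝ) (hσ : 0 < σ)
    (σt : ℝ → ℝ) (hmeas : Measurable σt)
    (σmin σmax : ℝ) (hσmin : 0 < σmin)
    (hbound : ∀ t ∈ Set.Ioo (0 : ℝ) 1, σmin ≤ σt t ∧ σt t ≤ σmax)
    (L : Matrix (Fin d) (Fin r) ℝ → Matrix (Fin d) (Fin r) ℝ → ℝ)
    (hL : ∀ U V : Matrix (Fin d) (Fin r) ℝ,
      L U V = ∫ t in Set.Ioo (0 : ℝ) 1,
        ((U * Vᵀ * V * Uᵀ + (σt t) ^ 2 • (1 : Matrix (Fin d) (Fin d) ℝ)) *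
          ((E * Eᵀ + (σ ^ 2 + (σt t) ^ 2) • (1 : Matrix (Fin d) (Fin d) ℝ))⁻¹ -
            (U * Vᵀ * V * Uᵀ + (σt t) ^ 2 • (1 : Matrix (Fin d) (Fin d) ℝ))⁻¹) ^ 2).trace)
    (Ustar Vstar : Matrix (Fin d) (Fin r) ℝ)
    (hUstar : Ustarᵀ * Ustar = 1) (hVstar : (Vstarᵀ * Vstar).PosDef) :
    ((∀ U V : Matrix (Fin d) (Fin r) ℝ, Uᵀ * U = 1 → (Vᵀ * V).PosDef →
        L Ustar Vstar ≤ L U V) ↔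
      ((∃ Q : Matrix (Fin r) (Fin r) ℝ, Qᵀ * Q = 1 ∧ Ustar = E * Q) ∧
        Vstarᵀ * Vstar = (1 + σ ^ 2) • (1 : Matrix (Fin r) (Fin r) ℝ))) := by
  have hc : 0 < σ ^ 2 := by positivity
  have hL' : ∀ U V : Matrix (Fin d) (Fin r) ℝ,
      L U V = ∫ t in Set.Ioo (0 : ℝ) 1, fisherTrace E U V (σ ^ 2) ((σt t) ^ 2) := hL
  have hpos : ∀ t ∈ Set.Ioo (0 : ℝ) 1, 0 < (σt t) ^ 2 := fun t ht =>
    pow_pos (hσmin.trans_le (hbound t ht).1) 2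
  have hmem : ∀ t ∈ Set.Ioo (0 : ℝ) 1, (σt t) ^ 2 ∈ Set.Icc (σmin ^ 2) (σmax ^ 2) :=
    fun t ht => ⟨pow_le_pow_left₀ hσmin.le (hbound t ht).1 2,
      pow_le_pow_left₀ (hσmin.le.trans (hbound t ht).1) (hbound t ht).2 2⟩
  have hint : ∀ U V : Matrix (Fin d) (Fin r) ℝ,
      IntegrableOn (fun t => fisherTrace E U V (σ ^ 2) ((σt t) ^ 2)) (Set.Ioo 0 1) := fun U V =>
    integrableOn_comp_of_bounded (continuousOn_fisherTrace E U V hc) (hmeas.pow_const 2)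
      (pow_pos hσmin 2) hmem
  have hintMin : IntegrableOn (fun t => fisherTraceMin d r (σ ^ 2) ((σt t) ^ 2))
      (Set.Ioo 0 1) :=
    integrableOn_comp_of_bounded (continuousOn_fisherTraceMin d r hc) (hmeas.pow_const 2)
      (pow_pos hσmin 2) hmem
  have hmin : ∀ U V : Matrix (Fin d) (Fin r) ℝ, Uᵀ * U = 1 → (Vᵀ * V).PosDef →
      ((∃ Q : Matrix (Fin r) (Fin r) ℝ, Qᵀ * Q = 1 ∧ U = E * Q) ∧
        Vᵀ * V = (1 + σ ^ 2) • (1 : Matrix (Fin r) (Fin r) ℝ)) →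
      L U V = ∫ t in Set.Ioo (0 : ℝ) 1, fisherTraceMin d r (σ ^ 2) ((σt t) ^ 2) := by
    intro U V hU hV h
    rw [hL']
    exact setIntegral_congr_fun measurableSet_Ioo fun t ht =>
      (fisherTrace_eq_min_iff hE hU hV hc (hpos t ht)).mpr h
  constructor
  · intro h
    have hV : (√(1 + σ ^ 2) • E)ᵀ * (√(1 + σ ^ 2) • E) =
        (1 + σ ^ 2) • (1 : Matrix (Fin r) (Fin r) ℝ) := by
      rw [Matrix.transpose_smul, Matrix.smul_mul, Matrix.mul_smul, hE, smul_smul,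
        Real.mul_self_sqrt (by positivity)]
    have hVpd : ((√(1 + σ ^ 2) • E)ᵀ * (√(1 + σ ^ 2) • E)).PosDef := by
      rw [hV]
      exact Matrix.PosDef.one.smul (by positivity)
    have hle := h E _ hE hVpd
    rw [hmin E _ hE hVpd ⟨⟨1, by simp, by simp⟩, hV⟩, hL'] at hle
    have hzero : (∫ t in Set.Ioo (0 : ℝ) 1, (fisherTrace E Ustar Vstar (σ ^ 2) ((σt t) ^ 2) -
        fisherTraceMin d r (σ ^ 2) ((σt t) ^ 2))) ≤ 0 := by
      rw [integral_sub (hint _ _) hintMin]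
      linarith
    have hnonneg : ∀ᵐ t ∂(volume.restrict (Set.Ioo (0 : ℝ) 1)),
        0 ≤ fisherTrace E Ustar Vstar (σ ^ 2) ((σt t) ^ 2) -
          fisherTraceMin d r (σ ^ 2) ((σt t) ^ 2) := by
      filter_upwards [ae_restrict_mem measurableSet_Ioo] with t ht
      exact sub_nonneg.mpr (fisherTraceMin_le hE hUstar Vstar hc (hpos t ht))
    have hae := (integral_eq_zero_iff_of_nonneg_ae hnonneg ((hint _ _).sub hintMin)).mp
      (le_antisymm hzero (integral_nonneg_of_ae hnonneg))
    have hne : (ae (volume.restrict (Set.Ioo (0 : ℝ) 1))).NeBot := by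
      rw [ae_neBot, Ne, Measure.restrict_eq_zero]
      simp
    obtain ⟨t, ht0, ht⟩ := (hae.and (ae_restrict_mem measurableSet_Ioo)).exists
    exact (fisherTrace_eq_min_iff hE hUstar hVstar hc (hpos t ht)).mp (sub_eq_zero.mp ht0)
  · intro h U V hU hV
    rw [hmin Ustar Vstar hUstar hVstar h, hL']
    exact setIntegral_mono_on hintMin (hint U V) measurableSet_Ioo fun t ht =>
      fisherTraceMin_le hE hU V hc (hpos t ht)
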